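/- Suppose the primitive set ℬ ⊆ ℕ is taut and contains an infinite pairwise coprime subset. Then X_η is hereditary: whenever x ∈ X_η and y ∈ {0,1}^ℤ satisfy y(n) ≤ x(n) for all n ∈ ℤ, then y ∈ X_η. -/

import Mathlib

open Filter Set Topology MeasureTheory

open scoped Classical

noncomputable section

/-- The set of multiples `M_B ⊆ ℤ` of a set `B ⊆ ℕ`. -/
def multiplesZ (B : Set ℕ) : Set ℤ := {n : ℤ | ∃ b ∈ B, (b : ℤ) ∣ n}

/-- The `B`-free integers `F_B = ℤ ∖ M_B`. -/
def freeZ (B : Set ℕ) : Set ℤ := (multiplesZ B)ᶜ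

/-- The logarithmically weighted averages `(1/log n) ∑_{k=1}^n 1_A(k)/k`. -/
def logWeight (A : Set ℤ) (n : ℕ) : ℝ :=
  (Real.log n)⁻¹ * ∑ k ∈ Finset.Icc 1 n, A.indicator (fun m : ℤ => ((m : ℝ))⁻¹) (k : ℤ)

/-- The lower logarithmic density of a set `A ⊆ ℤ`. -/
def logDensLow (A : Set ℤ) : ℝ := liminf (logWeight A) atTop

/-- `A ⊆ ℤ` has logarithmic density `d`. -/
def HasLogDensity (A : Set ℤ) (d : ℝ) : Prop := Tendsto (logWeight A) atTop (𝓝 d)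

/-- `B` is primitive: no element divides another one. -/
def Primitive (B : Set ℕ) : Prop := ∀ b ∈ B, ∀ b' ∈ B, b ∣ b' → b = b'

/-- `B` is Behrend: its set of multiples has logarithmic density one. -/
def IsBehrend (B : Set ℕ) : Prop := logDensLow (multiplesZ B) = 1

/-- `B` is taut: removing any element strictly decreases the logarithmic density
of the set of multiples. -/
def IsTaut (B : Set ℕ) : Prop :=
  ∀ b ∈ B, logDensLow (multiplesZ (B \ {b})) < logDensLow (multiplesZ B)

/-- `B̃^(N)`: the elements of `B` having no prime factor `≤ N`. -/
def Btilde (B : Set ℕ) (N : ℕ) : Set ℕ := {b ∈ B | ∀ p : ℕ, p.Prime → p ∣ b → N < p}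

/-- `B^(N)`: the elements of `B` all of whose prime factors are `≤ N`. -/
def Bsmooth (B : Set ℕ) (N : ℕ) : Set ℕ := {b ∈ B | ∀ p : ℕ, p.Prime → p ∣ b → p ≤ N}

/-- `η ∈ {0,1}^ℤ`, the indicator function of the `B`-free integers. -/
def eta (B : Set ℕ) : ℤ → Bool := fun n => decide (n ∈ freeZ B)

/-- `X_η`, the orbit closure of `η` under the left shift on `{0,1}^ℤ`. -/
def Xeta (B : Set ℕ) : Set (ℤ → Bool) :=
  closure (Set.range fun m : ℤ => fun n : ℤ => eta B (n + m))


/-! ### Mertens-type upper bound -/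

lemma prod_pow_dvd_factorial (n : ℕ) :
    (∏ p ∈ Nat.primesLE n, p ^ (n / p)) ∣ n.factorial := by
  apply Finset.prod_dvd_of_isRelPrime
  · intro p hp q hq hpq
    have hp' := Nat.prime_of_mem_primesLE hp
    have hq' := Nat.prime_of_mem_primesLE hq
    simp only [Function.onFun]
    rw [← Nat.coprime_iff_isRelPrime]
    exact Nat.Coprime.pow _ _ ((Nat.coprime_primes hp' hq').2 hpq)
  · intro p hp
    have hp' := Nat.prime_of_mem_primesLE hp
    rw [hp'.pow_dvd_factorial_iff (b := Nat.log p n + 2) (by omega)]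
    calc n / p = n / p ^ 1 := by simp
      _ ≤ _ := Finset.single_le_sum (f := fun i => n / p ^ i) (fun i _ => Nat.zero_le _)
        (by simp)

lemma sum_log_div_le (n : ℕ) (hn : 1 ≤ n) :
    ∑ p ∈ Nat.primesLE n, Real.log p / p ≤ Real.log n + Real.log 4 := by
  have hn0 : (0 : ℝ) < n := by exact_mod_cast hn
  have h1 : ∑ p ∈ Nat.primesLE n, ((n / p : ℕ) : ℝ) * Real.log p ≤ n * Real.log n := by
    have hd := Nat.le_of_dvd (Nat.factorial_pos n) (prod_pow_dvd_factorial n)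
    have h2 : (∏ p ∈ Nat.primesLE n, p ^ (n / p)) ≤ n ^ n := hd.trans (Nat.factorial_le_pow n)
    have h3 : ((∏ p ∈ Nat.primesLE n, p ^ (n / p) : ℕ) : ℝ) ≤ (n : ℝ) ^ n := by exact_mod_cast h2
    have h4 := Real.log_le_log (by
      have : 0 < ∏ p ∈ Nat.primesLE n, p ^ (n / p) :=
        Finset.prod_pos fun p hp => pow_pos (Nat.prime_of_mem_primesLE hp).pos _
      exact_mod_cast this) h3
    rw [Real.log_pow] at h4
    push_cast at h4
    rw [Real.log_prod] at h4
    · simpa [Real.log_pow] using h4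
    · intro p hp
      have := (Nat.prime_of_mem_primesLE hp).pos
      positivity
  have h2 : ∑ p ∈ Nat.primesLE n, Real.log p ≤ Real.log 4 * n := by
    have := Chebyshev.theta_le_log4_mul_x (x := n) hn0.le
    rwa [Chebyshev.theta_eq_sum_primesLE_log] at this
  have h3 : n * ∑ p ∈ Nat.primesLE n, Real.log p / p ≤
      ∑ p ∈ Nat.primesLE n, ((n / p : ℕ) : ℝ) * Real.log p + ∑ p ∈ Nat.primesLE n, Real.log p := by
    rw [Finset.mul_sum, ← Finset.sum_add_distrib]
    apply Finset.sum_le_sum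
    intro p hp
    have hp' := Nat.prime_of_mem_primesLE hp
    have hlog : 0 ≤ Real.log p := Real.log_natCast_nonneg p
    have : (n : ℝ) / p ≤ ((n / p : ℕ) : ℝ) + 1 := by
      rw [← Nat.floor_div_eq_div (K := ℝ)]; exact (Nat.lt_floor_add_one _).le
    calc (n : ℝ) * (Real.log p / p) = n / p * Real.log p := by ring
      _ ≤ (((n / p : ℕ) : ℝ) + 1) * Real.log p := by gcongr
      _ = _ := by ring
  have : n * ∑ p ∈ Nat.primesLE n, Real.log p / p ≤ n * (Real.log n + Real.log 4) := by
    linarith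
  exact le_of_mul_le_mul_left this hn0

lemma tsum_rpow_le {s : ℝ} (hs : 1 < s) :
    ∑' n : ℕ, (n : ℝ) ^ (-s) ≤ 1 + 1 / (s - 1) := by
  have h := ZetaAsymptotics.zeta_limit_aux1 hs
  have h0 : 0 ≤ ZetaAsymptotics.termTSum s :=
    tsum_nonneg fun n => ZetaAsymptotics.term_nonneg _ _
  have hsum : Summable fun n : ℕ => (n : ℝ) ^ (-s) := Real.summable_nat_rpow.2 (by linarith)
  rw [hsum.tsum_eq_zero_add]
  have h1 : ((0 : ℕ) : ℝ) ^ (-s) = 0 := by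
    rw [Nat.cast_zero, Real.zero_rpow (by linarith)]
  have h2 : ∑' n : ℕ, ((n + 1 : ℕ) : ℝ) ^ (-s) = ∑' n : ℕ, 1 / (n + 1 : ℝ) ^ s := by
    apply tsum_congr
    intro n
    rw [Real.rpow_neg (by positivity)]
    push_cast
    simp
  rw [h1, h2]
  have : 0 ≤ s * ZetaAsymptotics.termTSum s := by positivity
  linarith

lemma prod_rpow_le {s : ℝ} (hs : 1 < s) (n : ℕ) :
    ∏ p ∈ Nat.primesLE n, (1 - (p : ℝ) ^ (-s))⁻¹ ≤ 1 + 1 / (s - 1) := by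
  have hsum : Summable fun n : ℕ => (n : ℝ) ^ (-s) := Real.summable_nat_rpow.2 (by linarith)
  let f : ℕ →* ℝ :=
    { toFun := fun n => (n : ℝ) ^ (-s)
      map_one' := by simp
      map_mul' := fun a b => by
        push_cast
        exact Real.mul_rpow (by positivity) (by positivity) }
  have h := EulerProduct.prod_primesBelow_geometric_eq_tsum_smoothNumbers (f := f) hsum (n + 1)
  have h' : ∏ p ∈ Nat.primesLE n, (1 - (p : ℝ) ^ (-s))⁻¹ =
    ∑' m : (n + 1).smoothNumbers, (m : ℝ) ^ (-s) := h
  rw [h']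
  refine le_trans ?_ (tsum_rpow_le hs)
  exact hsum.tsum_subtype_le (fun n : ℕ => (n : ℝ) ^ (-s)) _ (fun n => by positivity) 

lemma mertens_term {p : ℕ} (hp : 2 ≤ p) {L : ℝ} (hL : 0 < L) :
    (1 - (p : ℝ)⁻¹)⁻¹ ≤ (1 - (p : ℝ) ^ (-(1 + 1 / L)))⁻¹ *
      Real.exp (2 / L * (Real.log p / p)) := by
  have hp2 : (2 : ℝ) ≤ p := by exact_mod_cast hp
  have hp0 : (0 : ℝ) < p := by linarith
  have hinv : (p : ℝ)⁻¹ ≤ 1 / 2 := by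
    rw [one_div]; exact inv_anti₀ (by norm_num) hp2
  have hinv0 : 0 < (p : ℝ)⁻¹ := by positivity
  have hlog : 0 ≤ Real.log p := Real.log_natCast_nonneg p
  have hlt : (p : ℝ) ^ (-(1 + 1 / L)) < 1 := by
    apply Real.rpow_lt_one_of_one_lt_of_neg (by linarith)
    have : 0 < 1 / L := by positivity
    linarith
  have h1 : (p : ℝ)⁻¹ * (1 - Real.log p / L) ≤ (p : ℝ) ^ (-(1 + 1 / L)) := by
    rw [neg_add, Real.rpow_add hp0, Real.rpow_neg_one]
    apply mul_le_mul_of_nonneg_left _ hinv0.le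
    rw [Real.rpow_def_of_pos hp0]
    have := Real.add_one_le_exp (Real.log p * -(1 / L))
    calc _ = Real.log p * -(1 / L) + 1 := by ring
      _ ≤ _ := this
  have h2 : 1 + 2 / L * (Real.log p / p) ≤ Real.exp (2 / L * (Real.log p / p)) := by
    linarith [Real.add_one_le_exp (2 / L * (Real.log p / p))]
  have h3 : 1 - (p : ℝ) ^ (-(1 + 1 / L)) ≤ (1 - (p : ℝ)⁻¹) *
      Real.exp (2 / L * (Real.log p / p)) := by
    refine le_trans ?_ (mul_le_mul_of_nonneg_left h2 (by linarith))
    have e : 2 / L * (Real.log p / p) = 2 * ((p : ℝ)⁻¹ * (Real.log p / L)) := by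
      field_simp
    rw [e]
    have hu : 0 ≤ (p : ℝ)⁻¹ * (Real.log p / L) := by positivity
    nlinarith
  rw [inv_mul_eq_div, le_div_iff₀ (by linarith), inv_mul_le_iff₀ (by linarith)]
  exact h3

/-- Third theorem of Mertens, upper bound. -/
lemma mertens : ∃ K : ℝ, 0 < K ∧ ∀ n : ℕ, 3 ≤ n →
    ∏ p ∈ Nat.primesLE n, (1 - (p : ℝ)⁻¹)⁻¹ ≤ K * Real.log n := by
  refine ⟨2 * Real.exp (2 + 2 * Real.log 4), by positivity, fun n hn => ?_⟩
  have hL1 : 1 ≤ Real.log n := by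
    rw [Real.le_log_iff_exp_le (by positivity)]
    have : (3 : ℝ) ≤ n := by exact_mod_cast hn
    linarith [Real.exp_one_lt_d9]
  set L := Real.log n with hL
  have hL0 : 0 < L := by linarith
  calc ∏ p ∈ Nat.primesLE n, (1 - (p : ℝ)⁻¹)⁻¹
      ≤ ∏ p ∈ Nat.primesLE n, ((1 - (p : ℝ) ^ (-(1 + 1 / L)))⁻¹ *
          Real.exp (2 / L * (Real.log p / p))) := by
        apply Finset.prod_le_prod
        · intro p hp
          have : (1 : ℝ) ≤ p := by exact_mod_cast (Nat.prime_of_mem_primesLE hp).one_le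
          have : (p : ℝ)⁻¹ ≤ 1 := inv_le_one_of_one_le₀ this
          exact inv_nonneg.2 (by linarith)
        · intro p hp
          exact mertens_term (Nat.two_le_of_mem_primesLE hp) hL0
    _ = (∏ p ∈ Nat.primesLE n, (1 - (p : ℝ) ^ (-(1 + 1 / L)))⁻¹) *
          Real.exp (2 / L * ∑ p ∈ Nat.primesLE n, Real.log p / p) := by
        rw [Finset.prod_mul_distrib, Finset.mul_sum, Real.exp_sum]
    _ ≤ (1 + 1 / ((1 + 1 / L) - 1)) * Real.exp (2 / L * (L + Real.log 4)) := by
        have h1 : (1 : ℝ) < 1 + 1 / L := by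
          have : 0 < 1 / L := by positivity
          linarith
        apply mul_le_mul (prod_rpow_le h1 n) _ (by positivity)
        · have : 0 < 1 / ((1 + 1 / L) - 1) := by
            apply one_div_pos.2; linarith
          linarith
        · apply Real.exp_le_exp.2
          exact mul_le_mul_of_nonneg_left (sum_log_div_le n (by omega)) (by positivity)
    _ ≤ (2 * L) * Real.exp (2 + 2 * Real.log 4) := by
        have h4 : 0 ≤ Real.log 4 := Real.log_nonneg (by norm_num)
        have e1 : 1 + 1 / ((1 + 1 / L) - 1) = 1 + L := by
          rw [add_sub_cancel_left, one_div_one_div]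
        rw [e1]
        apply mul_le_mul (by linarith) _ (by positivity) (by positivity)
        apply Real.exp_le_exp.2
        have : 2 / L * (L + Real.log 4) = 2 + 2 * (Real.log 4 / L) := by field_simp
        rw [this]
        have : Real.log 4 / L ≤ Real.log 4 := div_le_self h4 hL1
        linarith
    _ = _ := by ring

/-! ### Finitely additive translation invariant means -/

structure IsMean (μ : Set ℤ → ℝ) : Prop where
  nonneg : ∀ A, 0 ≤ μ A
  add : ∀ A C, Disjoint A C → μ (A ∪ C) = μ A + μ C
  shift : ∀ (A : Set ℤ) (j : ℤ), μ {n | n + j ∈ A} = μ A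

/-- residue class of `r` mod `q` -/
def cls (q : ℕ) (r : ℤ) : Set ℤ := {n | (q : ℤ) ∣ n - r}

/-- `A` is periodic mod `q` -/
def Per (q : ℕ) (A : Set ℤ) : Prop := ∀ n j : ℤ, n + q * j ∈ A ↔ n ∈ A

/-- number of residues -/
def cnt (q : ℕ) (A : Set ℤ) : ℝ := (((Finset.range q).filter fun r : ℕ => (r : ℤ) ∈ A).card : ℝ)

namespace IsMean

variable {μ : Set ℤ → ℝ}

lemma empty (h : IsMean μ) : μ ∅ = 0 := by
  have := h.add ∅ ∅ (by simp)
  simp at this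
  exact this

lemma mono (h : IsMean μ) {A C : Set ℤ} (hAC : A ⊆ C) : μ A ≤ μ C := by
  have := h.add A (C \ A) disjoint_sdiff_right
  rw [Set.union_sdiff_cancel hAC] at this
  linarith [h.nonneg (C \ A)]

lemma diff (h : IsMean μ) {A C : Set ℤ} (hAC : A ⊆ C) : μ (C \ A) = μ C - μ A := by
  have := h.add A (C \ A) disjoint_sdiff_right
  rw [Set.union_sdiff_cancel hAC] at this
  linarith

lemma union_le (h : IsMean μ) (A C : Set ℤ) : μ (A ∪ C) ≤ μ A + μ C := by
  have := h.add A (C \ A) disjoint_sdiff_right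
  rw [Set.union_sdiff_self] at this
  linarith [h.mono (sdiff_subset : C \ A ⊆ C)]

lemma biUnion_le (h : IsMean μ) {ι : Type*} (s : Finset ι) (f : ι → Set ℤ) :
    μ (⋃ i ∈ s, f i) ≤ ∑ i ∈ s, μ (f i) := by
  induction s using Finset.induction_on with
  | empty => simp [h.empty]
  | insert a s ha ih =>
    rw [Finset.set_biUnion_insert, Finset.sum_insert ha]
    linarith [h.union_le (f a) (⋃ i ∈ s, f i)]

lemma biUnion_eq (h : IsMean μ) {ι : Type*} (s : Finset ι) (f : ι → Set ℤ)
    (hd : ∀ i ∈ s, ∀ j ∈ s, i ≠ j → Disjoint (f i) (f j)) :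
    μ (⋃ i ∈ s, f i) = ∑ i ∈ s, μ (f i) := by
  induction s using Finset.induction_on with
  | empty => simp [h.empty]
  | insert a s ha ih =>
    rw [Finset.set_biUnion_insert, Finset.sum_insert ha, h.add, ih]
    · intro i hi j hj hij
      exact hd i (Finset.mem_insert_of_mem hi) j (Finset.mem_insert_of_mem hj) hij
    · rw [Set.disjoint_iUnion₂_right]
      intro i hi
      refine hd a (Finset.mem_insert_self _ _) i (Finset.mem_insert_of_mem hi) ?_
      rintro rfl
      exact ha hi

end IsMean

lemma cls_disjoint {q : ℕ} {i j : ℕ} (hi : i < q) (hj : j < q) (hij : i ≠ j) :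
    Disjoint (cls q i) (cls q j) := by
  rw [Set.disjoint_left]
  intro n hn hn'
  simp only [cls, Set.mem_ofPred_eq] at hn hn'
  have h := dvd_sub hn' hn
  have e : n - (j : ℤ) - (n - i) = i - j := by ring
  rw [e] at h
  have := Int.eq_zero_of_abs_lt_dvd h (by rw [abs_lt]; constructor <;> omega)
  omega

lemma exists_cls {q : ℕ} (hq : 0 < q) (n : ℤ) : ∃ r, r < q ∧ n ∈ cls q (r : ℕ) := by
  have hq' : (q : ℤ) ≠ 0 := by exact_mod_cast hq.ne'
  refine ⟨(n % q).toNat, ?_, ?_⟩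
  · have := Int.emod_lt_of_pos n (by exact_mod_cast hq : (0 : ℤ) < q)
    have := Int.emod_nonneg n hq'
    omega
  · simp only [cls, Set.mem_ofPred_eq]
    rw [Int.toNat_of_nonneg (Int.emod_nonneg n hq')]
    exact Int.dvd_self_sub_emod

lemma Per.mem_cls {q : ℕ} {A : Set ℤ} (hA : Per q A) {n r : ℤ} (h : n ∈ cls q r) :
    n ∈ A ↔ r ∈ A := by
  obtain ⟨j, hj⟩ := h
  have : n = r + q * j := by linarith
  rw [this, hA]

namespace IsMean

variable {μ : Set ℤ → ℝ}

lemma sum_cls (h : IsMean μ) {q : ℕ} (hq : 0 < q) (A : Set ℤ) :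
    μ A = ∑ r ∈ Finset.range q, μ (A ∩ cls q (r : ℕ)) := by
  rw [← h.biUnion_eq]
  · congr 1
    ext n
    simp only [Finset.mem_range, Set.mem_iUnion, Set.mem_inter_iff, exists_prop]
    constructor
    · intro hn
      obtain ⟨r, hr, hr'⟩ := exists_cls hq n
      exact ⟨r, hr, hn, hr'⟩
    · rintro ⟨r, -, hn, -⟩
      exact hn
  · intro i hi j hj hij
    rw [Finset.mem_range] at hi hj
    exact (cls_disjoint hi hj hij).mono inter_subset_right inter_subset_right

lemma inter_per (h : IsMean μ) {q : ℕ} (hq : 0 < q) {X A : Set ℤ} (hA : Per q A) {c : ℝ}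
    (hc : ∀ r : ℕ, μ (X ∩ cls q r) = c) : μ (X ∩ A) = cnt q A * c := by
  rw [h.sum_cls hq, cnt, Finset.card_filter]
  push_cast
  rw [Finset.sum_mul]
  apply Finset.sum_congr rfl
  intro r _
  by_cases hr : (r : ℤ) ∈ A
  · rw [if_pos hr, one_mul, ← hc r]
    congr 1
    ext n
    simp only [Set.mem_inter_iff]
    constructor
    · tauto
    · rintro ⟨h1, h2⟩
      exact ⟨⟨h1, (hA.mem_cls h2).2 hr⟩, h2⟩
  · rw [if_neg hr, zero_mul]
    convert h.empty
    ext n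
    simp only [Set.mem_inter_iff, Set.mem_empty_iff_false, iff_false]
    rintro ⟨⟨_, h1⟩, h2⟩
    exact hr ((hA.mem_cls h2).1 h1)

lemma inter_cls (h : IsMean μ) {q q' : ℕ} (hq' : 0 < q') (hc : Nat.Coprime q q')
    {A : Set ℤ} (hA : Per q A) (r : ℤ) : μ (A ∩ cls q' r) = μ A / q' := by
  have key : ∀ r' : ℤ, μ (A ∩ cls q' r') = μ (A ∩ cls q' r) := by
    intro r'
    obtain ⟨u, v, huv⟩ : IsCoprime (q : ℤ) (q' : ℤ) := Nat.isCoprime_iff_coprime.2 hc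
    have := h.shift (A ∩ cls q' r) (q * (u * (r - r')))
    rw [← this]
    congr 1
    ext n
    simp only [Set.mem_inter_iff, Set.mem_ofPred_eq, cls]
    rw [hA]
    have e : n + q * (u * (r - r')) - r = (n - r') - q' * (v * (r - r')) := by
      linear_combination (r - r') * huv
    rw [e]
    rw [dvd_sub_left (Dvd.intro _ rfl)]
  have hs := h.sum_cls hq' A
  simp only [key] at hs
  simp only [Finset.sum_const, Finset.card_range, nsmul_eq_mul] at hs
  have : (q' : ℝ) ≠ 0 := by exact_mod_cast hq'.ne'
  field_simp
  linarith

lemma per (h : IsMean μ) {q : ℕ} (hq : 0 < q) {A : Set ℤ} (hA : Per q A) :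
    μ A = cnt q A / q * μ univ := by
  have := h.inter_per hq hA (X := univ) (c := μ univ / q) (fun r => by
    apply h.inter_cls (q := 1) hq (by simp)
    intro n j; simp)
  rw [Set.univ_inter] at this
  rw [this]; ring

lemma inter (h : IsMean μ) (h1 : μ univ = 1) {q q' : ℕ} (hq' : 0 < q')
    (hc : Nat.Coprime q q') {A A' : Set ℤ} (hA : Per q A) (hA' : Per q' A') :
    μ (A ∩ A') = μ A * μ A' := by
  rw [h.inter_per hq' hA' (fun r => h.inter_cls hq' hc hA r), h.per hq' hA', h1]
  ring

/-- The scaled set. -/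
def scl (k : ℕ) (A : Set ℤ) : Set ℤ := {n | ∃ a ∈ A, n = k * a}

lemma scale (h : IsMean μ) {k : ℕ} (hk : 0 < k) : IsMean fun A => μ (scl k A) where
  nonneg A := h.nonneg _
  add A C hAC := by
    have hk' : (k : ℤ) ≠ 0 := by exact_mod_cast hk.ne'
    rw [← h.add]
    · congr 1
      ext n
      simp only [scl, Set.mem_union, Set.mem_ofPred_eq]
      constructor
      · rintro ⟨a, ha | ha, rfl⟩
        · exact Or.inl ⟨a, ha, rfl⟩
        · exact Or.inr ⟨a, ha, rfl⟩
      · rintro (⟨a, ha, rfl⟩ | ⟨a, ha, rfl⟩)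
        · exact ⟨a, Or.inl ha, rfl⟩
        · exact ⟨a, Or.inr ha, rfl⟩
    · rw [Set.disjoint_left] at hAC ⊢
      rintro n ⟨a, ha, rfl⟩ ⟨c, hc, hac⟩
      have := mul_left_cancel₀ hk' hac
      subst this
      exact hAC ha hc
  shift A j := by
    have hk' : (k : ℤ) ≠ 0 := by exact_mod_cast hk.ne'
    change μ (scl k {n | n + j ∈ A}) = μ (scl k A)
    rw [← h.shift (scl k A) (k * j)]
    congr 1
    ext n
    simp only [scl, Set.mem_ofPred_eq]
    constructor
    · rintro ⟨a, ha, rfl⟩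
      exact ⟨a + j, ha, by ring⟩
    · rintro ⟨a, ha, hn⟩
      exact ⟨a - j, by simpa using ha, by linarith⟩

lemma scl_univ (h : IsMean μ) {k : ℕ} (hk : 0 < k) : μ (scl k univ) = μ univ / k := by
  have := h.inter_cls (q := 1) hk (by simp) (A := univ) (by intro n j; simp) 0
  rw [← this]
  congr 1
  ext n
  simp only [scl, cls, Set.mem_ofPred_eq, Set.mem_univ, true_and, Set.univ_inter, sub_zero]
  exact Iff.rfl

lemma scl_per (h : IsMean μ) {k : ℕ} (hk : 0 < k) {q : ℕ} (hq : 0 < q) {A : Set ℤ}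
    (hA : Per q A) : μ (scl k A) = μ A / k := by
  rw [(h.scale hk).per hq hA, h.scl_univ hk, h.per hq hA]
  ring

end IsMean

/-! ### Ultrafilter logarithmic mean -/

lemma harm_eq (n : ℕ) : ∑ k ∈ Finset.Icc 1 n, ((k : ℝ))⁻¹ = ((harmonic n : ℚ) : ℝ) := by
  rw [harmonic_eq_sum_Icc]
  push_cast
  rfl

lemma logWeight_nonneg (A : Set ℤ) (n : ℕ) : 0 ≤ logWeight A n := by
  unfold logWeight
  apply mul_nonneg (inv_nonneg.2 (Real.log_natCast_nonneg n))
  apply Finset.sum_nonneg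
  intro k _
  simp only [Set.indicator]
  split_ifs <;> simp

lemma logWeight_univ_le (n : ℕ) : logWeight univ n ≤ 3 := by
  unfold logWeight
  simp only [Set.indicator_univ, Int.cast_natCast]
  rw [harm_eq]
  have h := harmonic_le_one_add_log n
  rcases lt_or_ge n 2 with hn | hn
  · interval_cases n <;> simp
  · have hl : (1 : ℝ) / 2 ≤ Real.log n := by
      have : Real.log 2 ≤ Real.log n := Real.log_le_log (by norm_num) (by exact_mod_cast hn)
      linarith [Real.log_two_gt_d9]
    rw [inv_mul_le_iff₀ (by linarith)]
    linarith

lemma logWeight_mono {A C : Set ℤ} (hAC : A ⊆ C) (n : ℕ) : logWeight A n ≤ logWeight C n := by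
  unfold logWeight
  apply mul_le_mul_of_nonneg_left _ (inv_nonneg.2 (Real.log_natCast_nonneg n))
  apply Finset.sum_le_sum
  intro k _
  by_cases h : (k : ℤ) ∈ A
  · rw [Set.indicator_of_mem h, Set.indicator_of_mem (hAC h)]
  · rw [Set.indicator_of_notMem h]
    simp only [Set.indicator]
    split_ifs <;> simp

lemma logWeight_le (A : Set ℤ) (n : ℕ) : logWeight A n ≤ 3 :=
  (logWeight_mono (Set.subset_univ A) n).trans (logWeight_univ_le n)

/-- The limit of logarithmic averages along an ultrafilter. -/
def um (𝒰 : Ultrafilter ℕ) (A : Set ℤ) : ℝ := limUnder (𝒰 : Filter ℕ) (logWeight A)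

lemma um_tendsto (𝒰 : Ultrafilter ℕ) (A : Set ℤ) :
    Tendsto (logWeight A) 𝒰 (𝓝 (um 𝒰 A)) := by
  apply tendsto_nhds_limUnder
  have := (isCompact_Icc (a := (0 : ℝ)) (b := 3)).ultrafilter_le_nhds (𝒰.map (logWeight A)) (by
    rw [Filter.le_principal_iff, Ultrafilter.coe_map, Filter.mem_map]
    apply Filter.univ_mem'
    intro n
    exact ⟨logWeight_nonneg A n, logWeight_le A n⟩)
  obtain ⟨x, -, hx⟩ := this
  exact ⟨x, hx⟩

lemma log_tendsto : Tendsto (fun n : ℕ => (Real.log n)⁻¹) atTop (𝓝 0) :=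
  (Real.tendsto_log_atTop.comp tendsto_natCast_atTop_atTop).inv_tendsto_atTop

lemma logWeight_univ_tendsto : Tendsto (logWeight univ) atTop (𝓝 1) := by
  have h1 : Tendsto (fun n : ℕ => (Real.log n)⁻¹ * 1 + 1) atTop (𝓝 (0 * 1 + 1)) :=
    (log_tendsto.mul_const 1).add_const 1
  rw [zero_mul, zero_add] at h1
  refine tendsto_of_tendsto_of_tendsto_of_le_of_le' tendsto_const_nhds h1 ?_ ?_
  · filter_upwards [eventually_ge_atTop 2] with n hn
    have hl : 0 < Real.log n := Real.log_pos (by exact_mod_cast hn)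
    unfold logWeight
    simp only [Set.indicator_univ, Int.cast_natCast]
    rw [harm_eq, le_inv_mul_iff₀ hl, mul_one]
    refine le_trans ?_ (log_add_one_le_harmonic n)
    apply Real.log_le_log (by positivity)
    push_cast; linarith
  · filter_upwards [eventually_ge_atTop 2] with n hn
    have hl : 0 < Real.log n := Real.log_pos (by exact_mod_cast hn)
    unfold logWeight
    simp only [Set.indicator_univ, Int.cast_natCast]
    rw [harm_eq]
    calc (Real.log n)⁻¹ * (harmonic n : ℝ) ≤ (Real.log n)⁻¹ * (1 + Real.log n) := by
          gcongr
          exact harmonic_le_one_add_log n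
      _ = _ := by field_simp

lemma shift_bound (A : Set ℤ) (n : ℕ) :
    |∑ k ∈ Finset.Icc 1 n, ({m : ℤ | m + 1 ∈ A}).indicator (fun m : ℤ => ((m : ℝ))⁻¹) (k : ℤ) -
      ∑ k ∈ Finset.Icc 1 n, A.indicator (fun m : ℤ => ((m : ℝ))⁻¹) (k : ℤ)| ≤ 3 := by
  set a : ℕ → ℝ := fun k => if (k : ℤ) ∈ A then 1 else 0 with ha
  have ha0 : ∀ k, 0 ≤ a k := fun k => by simp only [ha]; split_ifs <;> norm_num
  have ha1 : ∀ k, a k ≤ 1 := fun k => by simp only [ha]; split_ifs <;> norm_num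
  have e1 : ∀ k : ℕ, ({m : ℤ | m + 1 ∈ A}).indicator (fun m : ℤ => ((m : ℝ))⁻¹) (k : ℤ)
      = a (k + 1) * (k : ℝ)⁻¹ := by
    intro k
    simp only [ha, Set.indicator, Set.mem_ofPred_eq]
    push_cast
    split_ifs <;> simp
  have e2 : ∀ k : ℕ, A.indicator (fun m : ℤ => ((m : ℝ))⁻¹) (k : ℤ) = a k * (k : ℝ)⁻¹ := by
    intro k
    simp only [ha, Set.indicator]
    split_ifs <;> simp
  simp only [e1, e2]
  have key : a (n + 1) * ((n + 1 : ℕ) : ℝ)⁻¹ - a 1 ≤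
      ∑ k ∈ Finset.Icc 1 n, a (k + 1) * (k : ℝ)⁻¹ - ∑ k ∈ Finset.Icc 1 n, a k * (k : ℝ)⁻¹ ∧
      ∑ k ∈ Finset.Icc 1 n, a (k + 1) * (k : ℝ)⁻¹ - ∑ k ∈ Finset.Icc 1 n, a k * (k : ℝ)⁻¹ ≤
      a (n + 1) * ((n + 1 : ℕ) : ℝ)⁻¹ - a 1 + 1 - ((n + 1 : ℕ) : ℝ)⁻¹ := by
    induction n with
    | zero => simp
    | succ n ih =>
      rw [Finset.sum_Icc_succ_top (by omega), Finset.sum_Icc_succ_top (by omega)]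
      have hle : ((n + 1 + 1 : ℕ) : ℝ)⁻¹ ≤ ((n + 1 : ℕ) : ℝ)⁻¹ := by
        apply inv_anti₀ (by positivity)
        push_cast; linarith
      have := ha0 (n + 1 + 1)
      have := ha1 (n + 1 + 1)
      constructor <;> nlinarith [ih.1, ih.2]
  have h1 : ((n + 1 : ℕ) : ℝ)⁻¹ ≤ 1 := by
    apply inv_le_one_of_one_le₀; push_cast; linarith [(Nat.cast_nonneg n : (0 : ℝ) ≤ n)]
  have h0 : 0 ≤ ((n + 1 : ℕ) : ℝ)⁻¹ := by positivity
  have := ha0 (n + 1)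
  have := ha1 (n + 1)
  have := ha0 1
  have := ha1 1
  rw [abs_le]
  constructor <;> nlinarith [key.1, key.2]

lemma um_shift_one {𝒰 : Ultrafilter ℕ} (h𝒰 : (𝒰 : Filter ℕ) ≤ atTop) (A : Set ℤ) :
    um 𝒰 {n | n + 1 ∈ A} = um 𝒰 A := by
  have h1 := (um_tendsto 𝒰 {n | n + 1 ∈ A}).sub (um_tendsto 𝒰 A)
  have h2 : Tendsto (fun n : ℕ => (Real.log n)⁻¹ * 3) 𝒰 (𝓝 (0 * 3)) :=
    (log_tendsto.mono_left h𝒰).mul_const 3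
  rw [zero_mul] at h2
  have h3 := squeeze_zero_norm (f := fun n => logWeight {n | n + 1 ∈ A} n - logWeight A n)
    (a := fun n : ℕ => (Real.log n)⁻¹ * 3) (t₀ := (𝒰 : Filter ℕ)) (by
      intro n
      unfold logWeight
      rw [← mul_sub, Real.norm_eq_abs, abs_mul,
        abs_of_nonneg (inv_nonneg.2 (Real.log_natCast_nonneg n))]
      exact mul_le_mul_of_nonneg_left (shift_bound A n)
        (inv_nonneg.2 (Real.log_natCast_nonneg n))) h2
  have := tendsto_nhds_unique h1 h3
  linarith

lemma um_isMean {𝒰 : Ultrafilter ℕ} (h𝒰 : (𝒰 : Filter ℕ) ≤ atTop) : IsMean (um 𝒰) where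
  nonneg A := ge_of_tendsto' (um_tendsto 𝒰 A) (logWeight_nonneg A)
  add A C hAC := by
    refine tendsto_nhds_unique (um_tendsto 𝒰 (A ∪ C)) ?_
    convert (um_tendsto 𝒰 A).add (um_tendsto 𝒰 C) using 2 with n
    unfold logWeight
    rw [← mul_add, ← Finset.sum_add_distrib]
    simp only [Set.indicator_union_of_disjoint hAC]
  shift A j := by
    induction j using Int.induction_on with
    | zero => simp
    | succ i ih =>
      rw [← ih, ← um_shift_one h𝒰 {n | n + (i : ℤ) ∈ A}]
      congr 1; ext n; simp only [Set.mem_ofPred_eq]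
      rw [show n + ((i : ℤ) + 1) = n + 1 + i by ring]
    | pred i ih =>
      rw [← ih, ← um_shift_one h𝒰 {n | n + (-(i : ℤ) - 1) ∈ A}]
      congr 1; ext n; simp only [Set.mem_ofPred_eq]
      rw [show n + 1 + (-(i : ℤ) - 1) = n + -i by ring]

lemma um_univ {𝒰 : Ultrafilter ℕ} (h𝒰 : (𝒰 : Filter ℕ) ≤ atTop) : um 𝒰 univ = 1 :=
  tendsto_nhds_unique (um_tendsto 𝒰 univ) (logWeight_univ_tendsto.mono_left h𝒰)

lemma um_per_eq {𝒰 𝒱 : Ultrafilter ℕ} (h𝒰 : (𝒰 : Filter ℕ) ≤ atTop)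
    (h𝒱 : (𝒱 : Filter ℕ) ≤ atTop) {q : ℕ} (hq : 0 < q) {A : Set ℤ} (hA : Per q A) :
    um 𝒰 A = um 𝒱 A := by
  rw [(um_isMean h𝒰).per hq hA, (um_isMean h𝒱).per hq hA, um_univ h𝒰, um_univ h𝒱]

/-! ### The Davenport-Erdős estimate -/

lemma Per.compl {q : ℕ} {A : Set ℤ} (hA : Per q A) : Per q Aᶜ := by
  intro n j
  simp only [Set.mem_compl_iff, hA n j]

lemma per_mult (F : Finset ℕ) : Per (∏ b ∈ F, b) (multiplesZ F) := by
  intro n j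
  simp only [multiplesZ, Set.mem_ofPred_eq]
  refine exists_congr fun _ => and_congr_right fun hb => ?_
  have :=
    Dvd.dvd.mul_right (Int.natCast_dvd_natCast.2 (Finset.dvd_prod_of_mem (fun b => b) hb)) j
  exact dvd_add_left this

lemma prod_pos_of {F : Finset ℕ} (h : 0 ∉ F) : 0 < ∏ b ∈ F, b :=
  Finset.prod_pos fun b hb => Nat.pos_of_ne_zero fun h0 => h (h0 ▸ hb)

lemma mult_mono {C D : Set ℕ} (h : C ⊆ D) : multiplesZ C ⊆ multiplesZ D := by
  rintro n ⟨b, hb, hn⟩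
  exact ⟨b, h hb, hn⟩

/-- integers coprime to `N` -/
def cop (N : ℕ) : Set ℤ := {n | IsCoprime n (N : ℤ)}

lemma per_cop (N : ℕ) : Per N (cop N) := by
  intro n j
  simp only [cop, Set.mem_ofPred_eq]
  exact IsCoprime.add_mul_left_left_iff

lemma um_cop {𝒰 : Ultrafilter ℕ} (h𝒰 : (𝒰 : Filter ℕ) ≤ atTop) (x : ℕ) :
    um 𝒰 (cop x.factorial) = ∏ p ∈ Nat.primesLE x, (1 - (p : ℝ)⁻¹) := by
  have hx := Nat.factorial_pos x
  rw [(um_isMean h𝒰).per hx (per_cop _), um_univ h𝒰, mul_one]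
  have h1 : cnt x.factorial (cop x.factorial) = (Nat.totient x.factorial : ℝ) := by
    unfold cnt Nat.totient
    congr 2
    apply Finset.filter_congr
    intro r _
    simp only [cop, Set.mem_ofPred_eq]
    rw [Nat.isCoprime_iff_coprime]
    exact Nat.coprime_comm
  have h2 := Nat.totient_eq_mul_prod_factors x.factorial
  have h3 : x.factorial.primeFactors = Nat.primesLE x := by
    ext p
    simp only [Nat.mem_primeFactors, Nat.mem_primesLE]
    constructor
    · rintro ⟨hp, h, _⟩
      exact ⟨hp.dvd_factorial.1 h, hp⟩
    · rintro ⟨h, hp⟩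
      exact ⟨hp, hp.dvd_factorial.2 h, hx.ne'⟩
  rw [h3] at h2
  have h4 : (Nat.totient x.factorial : ℝ) = x.factorial * ∏ p ∈ Nat.primesLE x, (1 - (p : ℝ)⁻¹) := by
    have h5 := congrArg (fun t : ℚ => (t : ℝ)) h2
    push_cast at h5
    exact h5
  rw [h1, h4]
  have : (x.factorial : ℝ) ≠ 0 := by exact_mod_cast hx.ne'
  field_simp

lemma cop_dvd {x k w : ℕ} {v : ℤ} (hk : 1 ≤ k) (hkx : k ≤ x) (hv : v ∈ cop x.factorial)
    (h : (k : ℤ) ∣ w * v) : k ∣ w := by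
  have h1 : IsCoprime v (k : ℤ) :=
    IsCoprime.of_isCoprime_of_dvd_right hv (Int.natCast_dvd_natCast.2 (Nat.dvd_factorial hk hkx))
  exact Int.natCast_dvd_natCast.1 (h1.symm.dvd_of_dvd_mul_right h)

lemma de_sum {𝒰 : Ultrafilter ℕ} (h𝒰 : (𝒰 : Filter ℕ) ≤ atTop) {x : ℕ} {F : Finset ℕ} {G : Set ℕ}
    (hF : ∀ f ∈ F, 1 ≤ f ∧ f ≤ x) :
    (∏ p ∈ Nat.primesLE x, (1 - (p : ℝ)⁻¹)) *
      ∑ k ∈ Finset.Icc 1 x, (multiplesZ G \ multiplesZ F).indicator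
        (fun m : ℤ => ((m : ℝ))⁻¹) (k : ℤ) ≤ um 𝒰 (multiplesZ G \ multiplesZ F) := by
  have hm := um_isMean h𝒰
  set U := multiplesZ G \ multiplesZ (F : Set ℕ) with hU
  rw [← um_cop h𝒰]
  set W := cop x.factorial with hW
  have e : um 𝒰 W * ∑ k ∈ Finset.Icc 1 x, U.indicator (fun m : ℤ => ((m : ℝ))⁻¹) (k : ℤ) =
      ∑ k ∈ (Finset.Icc 1 x).filter (fun k : ℕ => (k : ℤ) ∈ U), um 𝒰 (IsMean.scl k W) := by
    rw [Finset.mul_sum, Finset.sum_filter]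
    apply Finset.sum_congr rfl
    intro k hk
    rw [Finset.mem_Icc] at hk
    simp only [Set.indicator]
    split_ifs
    · rw [hm.scl_per (by omega) (Nat.factorial_pos x) (per_cop _)]
      rw [div_eq_mul_inv, Int.cast_natCast]
    · simp
  rw [e, ← hm.biUnion_eq]
  · apply hm.mono
    intro n hn
    simp only [Set.mem_iUnion, Finset.mem_filter, Finset.mem_Icc] at hn
    obtain ⟨k, ⟨⟨hk1, hkx⟩, ⟨⟨g, hg, hgk⟩, hkF⟩⟩, w, hw, rfl⟩ := hn
    refine ⟨⟨g, hg, hgk.mul_right _⟩, ?_⟩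
    rintro ⟨f, hf, hfk⟩
    exact hkF ⟨f, hf, Int.natCast_dvd_natCast.2 (cop_dvd (hF f hf).1 (hF f hf).2 hw hfk)⟩
  · intro i hi j hj hij
    simp only [Finset.mem_filter, Finset.mem_Icc] at hi hj
    rw [Set.disjoint_left]
    rintro n ⟨a, ha, rfl⟩ ⟨c, hc, hac⟩
    apply hij
    apply Nat.dvd_antisymm
    · exact cop_dvd hi.1.1 hi.1.2 hc (w := j) ⟨a, hac.symm⟩
    · exact cop_dvd hj.1.1 hj.1.2 ha (w := i) ⟨c, hac⟩

/-- Davenport-Erdős type estimate. -/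
lemma de : ∃ K : ℝ, 0 < K ∧ ∀ (𝒰 : Ultrafilter ℕ), (𝒰 : Filter ℕ) ≤ atTop →
    ∀ (C : Set ℕ) (F : Finset ℕ) (δ : ℝ), 0 ∉ C → (F : Set ℕ) ⊆ C → 0 ≤ δ →
    (∀ G : Finset ℕ, (G : Set ℕ) ⊆ C → F ⊆ G → um 𝒰 (multiplesZ G \ multiplesZ F) ≤ δ) →
    um 𝒰 (multiplesZ C \ multiplesZ F) ≤ K * δ := by
  obtain ⟨K, hK, hmer⟩ := mertens
  refine ⟨K, hK, fun 𝒰 h𝒰 C F δ h0 hFC hδ hG => ?_⟩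
  refine le_of_tendsto (um_tendsto 𝒰 _) (h𝒰 ?_)
  filter_upwards [eventually_ge_atTop 3, eventually_ge_atTop (F.sup id)] with x hx hxF
  have hFx : ∀ f ∈ F, 1 ≤ f ∧ f ≤ x := by
    intro f hf
    refine ⟨Nat.pos_of_ne_zero ?_, (Finset.le_sup (f := id) hf).trans hxF⟩
    rintro rfl
    exact h0 (hFC hf)
  set G : Finset ℕ := F ∪ (Finset.Icc 1 x).filter (fun c => c ∈ C) with hGdef
  have hGC : (G : Set ℕ) ⊆ C := by
    intro g hg
    simp only [hGdef, Finset.coe_union, Set.mem_union, Finset.mem_coe, Finset.mem_filter] at hg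
    rcases hg with hg | hg
    · exact hFC hg
    · exact hg.2
  have h1 := hG G hGC Finset.subset_union_left
  have h2 := de_sum h𝒰 (G := (G : Set ℕ)) hFx
  have h3 := hmer x hx
  have hlog : 0 < Real.log x := Real.log_pos (by exact_mod_cast (by omega : 1 < x))
  have hpos : 0 < ∏ p ∈ Nat.primesLE x, (1 - (p : ℝ)⁻¹) := by
    apply Finset.prod_pos
    intro p hp
    have : (1 : ℝ) < p := by exact_mod_cast (Nat.prime_of_mem_primesLE hp).one_lt
    linarith [inv_lt_one_of_one_lt₀ this]
  rw [Finset.prod_inv_distrib] at h3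
  have h4 : ∑ k ∈ Finset.Icc 1 x, (multiplesZ C \ multiplesZ F).indicator
        (fun m : ℤ => ((m : ℝ))⁻¹) (k : ℤ) = ∑ k ∈ Finset.Icc 1 x,
        (multiplesZ (G : Set ℕ) \ multiplesZ F).indicator (fun m : ℤ => ((m : ℝ))⁻¹) (k : ℤ) := by
    apply Finset.sum_congr rfl
    intro k hk
    rw [Finset.mem_Icc] at hk
    have : (k : ℤ) ∈ multiplesZ C \ multiplesZ (F : Set ℕ) ↔
        (k : ℤ) ∈ multiplesZ (G : Set ℕ) \ multiplesZ (F : Set ℕ) := by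
      constructor
      · rintro ⟨⟨c, hc, hck⟩, hkF⟩
        refine ⟨⟨c, ?_, hck⟩, hkF⟩
        have hle := Nat.le_of_dvd (by omega) (Int.natCast_dvd_natCast.1 hck)
        have hc0 : c ≠ 0 := fun h => h0 (h ▸ hc)
        simp only [hGdef, Finset.coe_union, Set.mem_union, Finset.mem_coe, Finset.mem_filter,
          Finset.mem_Icc]
        right
        exact ⟨⟨by omega, by omega⟩, hc⟩
      · rintro ⟨h, hkF⟩
        exact ⟨mult_mono hGC h, hkF⟩
    simp only [Set.indicator, this]
  unfold logWeight
  rw [h4, inv_mul_le_iff₀ hlog]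
  set S := ∑ k ∈ Finset.Icc 1 x,
        (multiplesZ (G : Set ℕ) \ multiplesZ F).indicator (fun m : ℤ => ((m : ℝ))⁻¹) (k : ℤ)
  set w := ∏ p ∈ Nat.primesLE x, (1 - (p : ℝ)⁻¹)
  have h5 : w * S ≤ δ := h2.trans h1
  calc S ≤ w⁻¹ * δ := by rw [le_inv_mul_iff₀ hpos]; exact h5
    _ ≤ (K * Real.log x) * δ := by gcongr
    _ = _ := by ring

/-- The upper bound for a residue class intersected with a set of multiples. -/
lemma cls_mult_le {𝒰 : Ultrafilter ℕ} (h𝒰 : (𝒰 : Filter ℕ) ≤ atTop) {C : Set ℕ} (h0 : 0 ∉ C)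
    {q : ℕ} (hq : 0 < q) (hC : ∀ c ∈ C, Nat.Coprime c q) {ε : ℝ} (hε : 0 < ε)
    (hD : ∀ F : Finset ℕ, (F : Set ℕ) ⊆ C → um 𝒰 (multiplesZ F) ≤ ε) (r : ℤ) :
    um 𝒰 (multiplesZ C ∩ cls q r) ≤ 2 * ε / q := by
  obtain ⟨K, hK, hde⟩ := de
  have hm := um_isMean h𝒰
  have hq' : (0 : ℝ) < q := by exact_mod_cast hq
  set δ := ε / q / K with hδ
  have hδ0 : 0 < δ := by positivity
  set T : Set ℝ := {t | ∃ F : Finset ℕ, (F : Set ℕ) ⊆ C ∧ t = um 𝒰 (multiplesZ F)} with hT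
  have hTne : T.Nonempty := ⟨_, ∅, by simp, rfl⟩
  have hTb : BddAbove T := ⟨ε, by rintro t ⟨F, hF, rfl⟩; exact hD F hF⟩
  obtain ⟨t, ⟨F, hFC, rfl⟩, hFt⟩ := exists_lt_of_lt_csSup hTne (sub_lt_self (sSup T) hδ0)
  have h1 := hde 𝒰 h𝒰 C F δ h0 hFC hδ0.le (by
    intro G hG hFG
    rw [hm.diff (mult_mono (by exact_mod_cast hFG))]
    have := le_csSup hTb ⟨G, hG, rfl⟩
    linarith)
  have hcop : Nat.Coprime (∏ b ∈ F, b) q :=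
    Nat.Coprime.prod_left fun b hb => hC b (hFC hb)
  have h2 := hm.inter_cls hq hcop (per_mult F) r
  have h3 : um 𝒰 (multiplesZ C ∩ cls q r) ≤
      um 𝒰 ((multiplesZ C \ multiplesZ F) ∪ (multiplesZ F ∩ cls q r)) := by
    apply hm.mono
    intro n hn
    by_cases hnF : n ∈ multiplesZ (F : Set ℕ)
    · exact Or.inr ⟨hnF, hn.2⟩
    · exact Or.inl ⟨hn.1, hnF⟩
  have h4 := hm.union_le (multiplesZ C \ multiplesZ F) (multiplesZ (F : Set ℕ) ∩ cls q r)
  have h5 : um 𝒰 (multiplesZ (F : Set ℕ)) / q ≤ ε / q := by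
    gcongr
    exact hD F hFC
  have h6 : K * δ = ε / q := by rw [hδ]; field_simp
  have h7 : 2 * ε / q = ε / q + ε / q := by ring
  linarith

/-! ### Consequences of tautness -/

lemma free_union (F F' : Set ℕ) : freeZ (F ∪ F') = freeZ F ∩ freeZ F' := by
  ext n
  simp only [freeZ, multiplesZ, Set.mem_compl_iff, Set.mem_ofPred_eq, Set.mem_inter_iff,
    Set.mem_union]
  constructor
  · intro h
    exact ⟨fun ⟨b, hb, hn⟩ => h ⟨b, Or.inl hb, hn⟩, fun ⟨b, hb, hn⟩ => h ⟨b, Or.inr hb, hn⟩⟩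
  · rintro ⟨h1, h2⟩ ⟨b, hb | hb, hn⟩
    · exact h1 ⟨b, hb, hn⟩
    · exact h2 ⟨b, hb, hn⟩

lemma um_free {𝒰 : Ultrafilter ℕ} (h𝒰 : (𝒰 : Filter ℕ) ≤ atTop) (F : Set ℕ) :
    um 𝒰 (freeZ F) = 1 - um 𝒰 (multiplesZ F) := by
  have := (um_isMean h𝒰).diff (Set.subset_univ (multiplesZ F))
  rw [um_univ h𝒰, ← Set.compl_eq_univ_sdiff] at this
  exact this

lemma zero_one {𝒰 : Ultrafilter ℕ} (h𝒰 : (𝒰 : Filter ℕ) ≤ atTop) {C : Set ℕ} (h0 : 0 ∉ C)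
    {ε : ℝ} (h : ∀ k : ℕ, ∃ F : Finset ℕ, (F : Set ℕ) ⊆ C ∧
      (∀ f ∈ F, Nat.Coprime f k.factorial) ∧ ε ≤ um 𝒰 (multiplesZ F)) (j k : ℕ) :
    ∃ F : Finset ℕ, (F : Set ℕ) ⊆ C ∧
      (∀ f ∈ F, Nat.Coprime f k.factorial) ∧ um 𝒰 (freeZ F) ≤ (1 - ε) ^ j := by
  have hm := um_isMean h𝒰
  induction j with
  | zero =>
    refine ⟨∅, by simp, by simp, ?_⟩
    rw [pow_zero, ← um_univ h𝒰]
    exact hm.mono (Set.subset_univ _)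
  | succ j ih =>
    obtain ⟨F, hFC, hFk, hF⟩ := ih
    obtain ⟨F', hFC', hFk', hF'⟩ := h (max k (∏ b ∈ F, b))
    have hz : 0 ∉ F := fun hh => h0 (hFC hh)
    have hz' : 0 ∉ F' := fun hh => h0 (hFC' hh)
    refine ⟨F ∪ F', ?_, ?_, ?_⟩
    · rw [Finset.coe_union]; exact Set.union_subset hFC hFC'
    · intro f hf
      rcases Finset.mem_union.1 hf with hf | hf
      · exact hFk f hf
      · exact (hFk' f hf).coprime_dvd_right (Nat.factorial_dvd_factorial (le_max_left _ _))
    · rw [Finset.coe_union, free_union]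
      have hc : Nat.Coprime (∏ b ∈ F, b) (∏ b ∈ F', b) := by
        apply Nat.Coprime.prod_right
        intro f hf
        exact ((hFk' f hf).coprime_dvd_right
          (Nat.dvd_factorial (prod_pos_of hz) (le_max_right _ _))).symm
      have := hm.inter (um_univ h𝒰) (prod_pos_of hz') hc (per_mult F).compl (per_mult F').compl
      rw [freeZ, freeZ, this, pow_succ]
      have h1 := um_free h𝒰 (F' : Set ℕ)
      apply mul_le_mul hF _ (hm.nonneg _) ((hm.nonneg _).trans hF)
      change um 𝒰 (freeZ F') ≤ _
      linarith

lemma taut_ultra {B : Set ℕ} (htaut : IsTaut B) {b : ℕ} (hb : b ∈ B) :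
    ∃ 𝒰 : Ultrafilter ℕ, (𝒰 : Filter ℕ) ≤ atTop ∧
      um 𝒰 (multiplesZ (B \ {b})) < um 𝒰 (multiplesZ B) := by
  have h := htaut b hb
  unfold logDensLow at h
  obtain ⟨c, hc1, hc2⟩ := exists_between h
  obtain ⟨c', hc3, hc4⟩ := exists_between hc2
  have hbd : ∀ A, IsBoundedUnder (· ≥ ·) atTop (logWeight A) := fun A =>
    isBoundedUnder_of ⟨0, fun n => logWeight_nonneg A n⟩
  have hbd' : ∀ A, IsBoundedUnder (· ≤ ·) atTop (logWeight A) := fun A =>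
    isBoundedUnder_of ⟨3, fun n => logWeight_le A n⟩
  have h1 : ∃ᶠ n in atTop, logWeight (multiplesZ (B \ {b})) n < c :=
    frequently_lt_of_liminf_lt (hbd' _).isCoboundedUnder_ge hc1
  have h2 : ∀ᶠ n in atTop, c' < logWeight (multiplesZ B) n :=
    eventually_lt_of_lt_liminf hc4 (hbd _)
  have hne : NeBot (atTop ⊓ 𝓟 {n | logWeight (multiplesZ (B \ {b})) n < c}) :=
    frequently_mem_iff_neBot.1 h1
  refine ⟨Ultrafilter.of (atTop ⊓ 𝓟 {n | logWeight (multiplesZ (B \ {b})) n < c}), ?_, ?_⟩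
  · exact (Ultrafilter.of_le _).trans inf_le_left
  · set 𝒰 := Ultrafilter.of (atTop ⊓ 𝓟 {n | logWeight (multiplesZ (B \ {b})) n < c})
    have hle : (𝒰 : Filter ℕ) ≤ atTop := (Ultrafilter.of_le _).trans inf_le_left
    have e1 : um 𝒰 (multiplesZ (B \ {b})) ≤ c := by
      apply le_of_tendsto (um_tendsto 𝒰 _)
      have : (𝒰 : Filter ℕ) ≤ 𝓟 {n | logWeight (multiplesZ (B \ {b})) n < c} :=
        (Ultrafilter.of_le _).trans inf_le_right
      filter_upwards [Filter.le_principal_iff.1 this] with n hn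
      exact le_of_lt hn
    have e2 : c' ≤ um 𝒰 (multiplesZ B) := by
      apply ge_of_tendsto (um_tendsto 𝒰 _)
      filter_upwards [hle h2] with n hn
      exact le_of_lt hn
    linarith

/-- elements `c` coprime to `k!` with `d * c ∈ B` -/
def tail (B : Set ℕ) (d k : ℕ) : Set ℕ := {c | d * c ∈ B ∧ Nat.Coprime c k.factorial}

lemma taut_tail {B : Set ℕ} (hB0 : 0 ∉ B) (htaut : IsTaut B) {d : ℕ} (hd : 0 < d) (hdB : d ∉ B)
    {ε : ℝ} (hε : 0 < ε) : ∃ k : ℕ, ∀ k' : ℕ, k ≤ k' → ∀ F : Finset ℕ,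
      (F : Set ℕ) ⊆ tail B d k' → ∀ 𝒰 : Ultrafilter ℕ, (𝒰 : Filter ℕ) ≤ atTop →
      um 𝒰 (multiplesZ F) ≤ ε := by
  by_contra hcon
  push Not at hcon
  set C : Set ℕ := {c | d * c ∈ B} with hC
  have h0 : 0 ∉ C := by simpa [hC] using hB0
  have hall : ∀ 𝒱 : Ultrafilter ℕ, (𝒱 : Filter ℕ) ≤ atTop → ∀ k : ℕ, ∃ F : Finset ℕ,
      (F : Set ℕ) ⊆ C ∧ (∀ f ∈ F, Nat.Coprime f k.factorial) ∧ ε ≤ um 𝒱 (multiplesZ F) := by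
    intro 𝒱 h𝒱 k
    obtain ⟨k', hk, F, hF, 𝒰, h𝒰, hlt⟩ := hcon k
    have hz : 0 ∉ F := fun hh => h0 (hF hh).1
    refine ⟨F, fun f hf => (hF hf).1, fun f hf => ?_, ?_⟩
    · exact (hF hf).2.coprime_dvd_right (Nat.factorial_dvd_factorial hk)
    · rw [um_per_eq h𝒱 h𝒰 (prod_pos_of hz) (per_mult F)]
      exact hlt.le
  have hexc : ∃ c, c ∈ C := by
    by_contra hne
    push Not at hne
    obtain ⟨F, hF, -, hFε⟩ := hall (Ultrafilter.of atTop) (Ultrafilter.of_le _) 0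
    have : multiplesZ (F : Set ℕ) = ∅ := by
      ext n
      simp only [multiplesZ, Set.mem_ofPred_eq, Set.mem_empty_iff_false, iff_false]
      rintro ⟨b, hb, -⟩
      exact hne b (hF hb)
    rw [this, (um_isMean (Ultrafilter.of_le _)).empty] at hFε
    linarith
  obtain ⟨c, hc⟩ := hexc
  obtain ⟨𝒱, h𝒱, hlt⟩ := taut_ultra htaut (b := d * c) hc
  have hm := um_isMean h𝒱
  have hc0 : c ≠ 0 := fun h => h0 (h ▸ hc)
  have hc1 : c ≠ 1 := by
    rintro rfl
    apply hdB
    simpa [hC] using hc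
  have key : ∀ j : ℕ, um 𝒱 (multiplesZ B) - um 𝒱 (multiplesZ (B \ {d * c})) ≤ (1 - ε) ^ j := by
    intro j
    obtain ⟨F, hFC, hFk, hF⟩ := zero_one h𝒱 h0 (hall 𝒱 h𝒱) j c
    have hz : 0 ∉ F := fun hh => h0 (hFC hh)
    rw [← hm.diff (mult_mono sdiff_subset)]
    have hsub : multiplesZ B \ multiplesZ (B \ {d * c}) ⊆ IsMean.scl d (freeZ F) := by
      rintro n ⟨⟨b, hb, hbn⟩, hn⟩
      have hbc : b = d * c := by
        by_contra hne
        exact hn ⟨b, ⟨hb, hne⟩, hbn⟩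
      subst hbc
      obtain ⟨t, rfl⟩ := hbn
      refine ⟨c * t, ?_, by push_cast; ring⟩
      rintro ⟨f, hf, hft⟩
      apply hn
      refine ⟨d * f, ⟨hFC hf, ?_⟩, ?_⟩
      · intro heq
        have hfc : f = c := Nat.eq_of_mul_eq_mul_left hd heq
        subst hfc
        have h1 := hFk f hf
        have h2 : f ∣ f.factorial := Nat.dvd_factorial (Nat.pos_of_ne_zero hc0) le_rfl
        exact hc1 (Nat.Coprime.eq_one_of_dvd h1 h2)
      · push_cast
        rw [mul_assoc]
        exact mul_dvd_mul_left _ hft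
    calc _ ≤ um 𝒱 (IsMean.scl d (freeZ F)) := hm.mono hsub
      _ = um 𝒱 (freeZ F) / d := hm.scl_per hd (prod_pos_of hz) (per_mult F).compl
      _ ≤ um 𝒱 (freeZ F) := div_le_self (hm.nonneg _) (by exact_mod_cast hd)
      _ ≤ _ := hF
  have hε1 : ε ≤ 1 := by
    obtain ⟨F, -, -, hFε⟩ := hall 𝒱 h𝒱 0
    have := hm.mono (Set.subset_univ (multiplesZ (F : Set ℕ)))
    rw [um_univ h𝒱] at this
    linarith
  have hlim : Tendsto (fun j : ℕ => (1 - ε) ^ j) atTop (𝓝 0) :=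
    tendsto_pow_atTop_nhds_zero_of_lt_one (by linarith) (by linarith)
  have := ge_of_tendsto' hlim key
  linarith

/-! ### The main argument -/

lemma exists_coprime_mem {S : Set ℕ} (hS : S.Infinite)
    (hc : ∀ a ∈ S, ∀ c ∈ S, a ≠ c → Nat.Coprime a c) {N : ℕ} (hN : 0 < N) :
    ∃ s ∈ S, Nat.Coprime s N := by
  by_contra hcon
  push Not at hcon
  refine (Set.infinite_of_injOn_mapsTo (f := fun s => (Nat.gcd s N).minFac)
    (t := (N.primeFactors : Set ℕ)) ?_ ?_ hS) (Finset.finite_toSet _)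
  · intro a ha c hc' heq
    by_contra hne
    have h1 : (Nat.gcd a N).minFac ∣ a := (Nat.minFac_dvd _).trans (Nat.gcd_dvd_left _ _)
    have h2 : (Nat.gcd a N).minFac ∣ c := by
      have : (Nat.gcd a N).minFac = (Nat.gcd c N).minFac := heq
      rw [this]
      exact (Nat.minFac_dvd _).trans (Nat.gcd_dvd_left _ _)
    have h3 := Nat.dvd_gcd h1 h2
    rw [Nat.Coprime.gcd_eq_one (hc a ha c hc' hne)] at h3
    exact (Nat.minFac_prime (hcon a ha)).one_lt.ne' (Nat.dvd_one.1 h3)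
  · intro a ha
    simp only [Finset.mem_coe, Nat.mem_primeFactors]
    exact ⟨Nat.minFac_prime (hcon a ha), (Nat.minFac_dvd _).trans (Nat.gcd_dvd_right _ _), hN.ne'⟩

lemma crt_zeros {S : Set ℕ} (hS : S.Infinite) (hS0 : 0 ∉ S)
    (hc : ∀ a ∈ S, ∀ c ∈ S, a ≠ c → Nat.Coprime a c) {Q : ℕ} (hQ : 0 < Q) (Z : Finset ℤ) :
    ∃ (s : ℤ → ℕ) (r : ℤ), (Q : ℤ) ∣ r ∧ ∀ n ∈ Z, s n ∈ S ∧ (s n : ℤ) ∣ n + r := by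
  induction Z using Finset.induction_on with
  | empty => exact ⟨fun _ => 0, 0, dvd_zero _, by simp⟩
  | insert a Z ha ih =>
    obtain ⟨s, r, hQr, hs⟩ := ih
    have hP : 0 < ∏ n ∈ Z, s n := Finset.prod_pos fun n hn =>
      Nat.pos_of_ne_zero fun h => hS0 (h ▸ (hs n hn).1)
    obtain ⟨t, htS, ht⟩ := exists_coprime_mem hS hc (Nat.mul_pos hQ hP)
    set M := Q * ∏ n ∈ Z, s n with hM
    obtain ⟨u, v, huv⟩ : IsCoprime (t : ℤ) (M : ℤ) := Nat.isCoprime_iff_coprime.2 ht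
    have hMr : (M : ℤ) ∣ M * (v * (-a - r)) := Dvd.intro _ rfl
    refine ⟨Function.update s a t, r + M * (v * (-a - r)), ?_, ?_⟩
    · refine dvd_add hQr (Dvd.dvd.trans ?_ hMr)
      rw [hM]; push_cast; exact Dvd.intro _ rfl
    · intro n hn
      rcases Finset.mem_insert.1 hn with rfl | hn
      · rw [Function.update_self]
        refine ⟨htS, u * (n + r), ?_⟩
        linear_combination (-(n : ℤ) - r) * huv
      · have hne : n ≠ a := fun h => ha (h ▸ hn)
        rw [Function.update_of_ne hne]
        refine ⟨(hs n hn).1, ?_⟩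
        rw [← add_assoc]
        refine dvd_add (hs n hn).2 (Dvd.dvd.trans ?_ hMr)
        apply Int.natCast_dvd_natCast.2
        rw [hM]
        exact Dvd.dvd.mul_left (Finset.dvd_prod_of_mem s hn) _

lemma main_pattern {B : Set ℕ} (hB0 : 0 ∉ B) (htaut : IsTaut B)
    (hcop : ∃ S ⊆ B, S.Infinite ∧ ∀ a ∈ S, ∀ c ∈ S, a ≠ c → Nat.Coprime a c)
    (A Z : Finset ℤ) (hAZ : Disjoint A Z) (hA : ∀ n ∈ A, n ∈ freeZ B) :
    ∃ m : ℤ, (∀ n ∈ A, n + m ∈ freeZ B) ∧ ∀ n ∈ Z, n + m ∈ multiplesZ B := by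
  obtain ⟨S, hSB, hS, hSc⟩ := hcop
  have hS0 : 0 ∉ S := fun h => hB0 (hSB h)
  have hA0 : ∀ n ∈ A, n ≠ 0 := by
    rintro n hn rfl
    obtain ⟨s, hs⟩ := hS.nonempty
    exact hA 0 hn ⟨s, hSB hs, dvd_zero _⟩
  set Dv : Finset ℕ := A.biUnion fun n => n.natAbs.divisors with hDv
  have hDv1 : ∀ d ∈ Dv, 0 < d ∧ d ∉ B := by
    intro d hd
    simp only [hDv, Finset.mem_biUnion, Nat.mem_divisors] at hd
    obtain ⟨n, hn, hdn, hn0⟩ := hd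
    refine ⟨Nat.pos_of_dvd_of_pos hdn (Nat.pos_of_ne_zero hn0), fun hdB => ?_⟩
    exact hA n hn ⟨d, hdB, Int.natCast_dvd.2 hdn⟩
  set J := A ×ˢ Dv with hJ
  set ε : ℝ := 1 / (2 * ((J.card : ℝ) + 1)) with hε
  have hε0 : 0 < ε := by positivity
  have hex : ∀ d : ℕ, ∃ k : ℕ, d ∈ Dv → ∀ k' : ℕ, k ≤ k' → ∀ F : Finset ℕ,
      (F : Set ℕ) ⊆ tail B d k' → ∀ 𝒰 : Ultrafilter ℕ, (𝒰 : Filter ℕ) ≤ atTop →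
      um 𝒰 (multiplesZ F) ≤ ε := by
    intro d
    by_cases hd : d ∈ Dv
    · obtain ⟨k, hk⟩ := taut_tail hB0 htaut (hDv1 d hd).1 (hDv1 d hd).2 hε0
      exact ⟨k, fun _ => hk⟩
    · exact ⟨0, fun h => absurd h hd⟩
  choose kf hkf using hex
  set k : ℕ := Dv.sup kf + A.sup Int.natAbs + (A ×ˢ Z).sup (fun p => (p.1 - p.2).natAbs) with hk
  have hk1 : ∀ d ∈ Dv, kf d ≤ k := fun d hd => by
    have := Finset.le_sup (f := kf) hd
    omega
  have hk2 : ∀ n ∈ A, n.natAbs ≤ k := fun n hn => by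
    have := Finset.le_sup (f := Int.natAbs) hn
    omega
  have hk3 : ∀ n ∈ A, ∀ n' ∈ Z, (n - n').natAbs ≤ k := fun n hn n' hn' => by
    have := Finset.le_sup (f := fun p : ℤ × ℤ => (p.1 - p.2).natAbs)
      (Finset.mem_product.2 ⟨hn, hn'⟩ : (n, n') ∈ A ×ˢ Z)
    simp only [] at this
    omega
  have hkfac := Nat.factorial_pos k
  set Q : ℕ := k.factorial * k.factorial with hQ
  have hQ0 : 0 < Q := Nat.mul_pos hkfac hkfac
  obtain ⟨s, r, hQr, hs⟩ := crt_zeros hS hS0 hSc hQ0 Z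
  set P : ℕ := ∏ n ∈ Z, s n with hP
  have hP0 : 0 < P := Finset.prod_pos fun n hn =>
      Nat.pos_of_ne_zero fun h => hS0 (h ▸ (hs n hn).1)
  set q := Q * P with hq
  have hq0 : 0 < q := Nat.mul_pos hQ0 hP0
  have hqR : (0 : ℝ) < q := by exact_mod_cast hq0
  set 𝒰 : Ultrafilter ℕ := Ultrafilter.of atTop
  have h𝒰 : (𝒰 : Filter ℕ) ≤ atTop := Ultrafilter.of_le _
  have hm := um_isMean h𝒰
  set C : ℕ → Set ℕ := fun d => {c | d * c ∈ B ∧ Nat.Coprime c q} with hC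
  set bad : ℤ × ℕ → Set ℤ := fun p => {m | m + p.1 ∈ multiplesZ (C p.2) ∩ cls q (r + p.1)} with hbad
  have hbadle : ∀ p ∈ J, um 𝒰 (bad p) ≤ 2 * ε / q := by
    rintro ⟨n, d⟩ hp
    have hd : d ∈ Dv := (Finset.mem_product.1 hp).2
    have e : um 𝒰 (bad (n, d)) = um 𝒰 (multiplesZ (C d) ∩ cls q (r + n)) :=
      hm.shift (multiplesZ (C d) ∩ cls q (r + n)) n
    rw [e]
    apply cls_mult_le h𝒰 _ hq0 (fun c hc => hc.2) hε0
    · intro F hF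
      refine hkf d hd k (hk1 d hd) F (fun f hf => ⟨(hF hf).1, ?_⟩) 𝒰 h𝒰
      refine (hF hf).2.coprime_dvd_right ?_
      rw [hq, hQ, mul_assoc]
      exact Dvd.intro _ rfl
    · rintro ⟨h, -⟩
      apply hB0
      simpa using h
  have hcls : um 𝒰 (cls q r) = 1 / q := by
    have := hm.inter_cls (q := 1) hq0 (by simp) (A := univ) (by intro n j; simp) r
    rwa [Set.univ_inter, um_univ h𝒰] at this
  have hexm : ∃ m ∈ cls q r, ∀ p ∈ J, m ∉ bad p := by
    by_contra hcon
    push Not at hcon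
    have h1 : cls q r ⊆ ⋃ p ∈ J, bad p := by
      intro m hmr
      obtain ⟨p, hp, hmp⟩ := hcon m hmr
      exact Set.mem_biUnion hp hmp
    have h2 := (hm.mono h1).trans (hm.biUnion_le J bad)
    have h3 := h2.trans (Finset.sum_le_sum hbadle)
    rw [hcls, Finset.sum_const, nsmul_eq_mul, ← mul_div_assoc] at h3
    have h4 : (1 : ℝ) ≤ J.card * (2 * ε) := (div_le_div_iff_of_pos_right hqR).1 h3
    have h5 : (J.card : ℝ) * (2 * ε) = J.card / (J.card + 1) := by
      rw [hε]; field_simp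
    rw [h5, one_le_div (by positivity)] at h4
    linarith
  obtain ⟨m, hmr, hmbad⟩ := hexm
  have hmr' : (q : ℤ) ∣ m - r := hmr
  have hsm : ∀ n ∈ Z, (s n : ℤ) ∣ n + m := by
    intro n hn
    have h1 : (s n : ℤ) ∣ m - r := by
      refine Dvd.dvd.trans (Int.natCast_dvd_natCast.2 ?_) hmr'
      rw [hq]
      exact Dvd.dvd.mul_left (Finset.dvd_prod_of_mem s hn) _
    have h2 := dvd_add (hs n hn).2 h1
    have e : n + r + (m - r) = n + m := by ring
    rwa [e] at h2
  refine ⟨m, ?_, fun n hn => ⟨s n, hSB (hs n hn).1, hsm n hn⟩⟩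
  intro n hn
  rintro ⟨b, hbB, hbn⟩
  have hn0 := hA0 n hn
  have hnabs : 0 < n.natAbs := Int.natAbs_pos.2 hn0
  -- `n` divides `k!`
  obtain ⟨e, he⟩ : n ∣ (k.factorial : ℤ) :=
    Int.dvd_natCast.2 (Nat.dvd_factorial hnabs (hk2 n hn))
  obtain ⟨t, ht⟩ : (Q : ℤ) ∣ m := by
    have h1 : (Q : ℤ) ∣ m - r := Dvd.dvd.trans (by rw [hq]; push_cast; exact Dvd.intro _ rfl) hmr'
    have := dvd_add h1 hQr
    simpa using this
  set u : ℤ := 1 + (k.factorial : ℤ) * (e * t) with hu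
  have hnu : n + m = n * u := by
    rw [ht, hu, hQ]; push_cast
    linear_combination ((k.factorial : ℤ) * t) * he
  have hucop : IsCoprime u (k.factorial : ℤ) := ⟨1, -(e * t), by rw [hu]; ring⟩
  -- decompose `b`
  set d := Nat.gcd b n.natAbs with hd
  have hd0 : 0 < d := Nat.gcd_pos_of_pos_right _ hnabs
  obtain ⟨c, hc⟩ : d ∣ b := Nat.gcd_dvd_left _ _
  obtain ⟨n1, hn1⟩ : (d : ℤ) ∣ n := Int.natCast_dvd.2 (Nat.gcd_dvd_right _ _)
  have hcn1 : IsCoprime (c : ℤ) n1 := by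
    have hcc : Nat.Coprime c n1.natAbs := by
      have h1 : n.natAbs = d * n1.natAbs := by rw [hn1, Int.natAbs_mul]; simp
      have h2 : d = d * Nat.gcd c n1.natAbs := by
        rw [← Nat.gcd_mul_left, ← hc, ← h1]
      exact Nat.eq_of_mul_eq_mul_left hd0 (by rw [← h2, mul_one])
    rw [Int.isCoprime_iff_gcd_eq_one]
    simpa [Int.gcd] using hcc
  have hcu : (c : ℤ) ∣ u := by
    have h1 : (d : ℤ) * c ∣ d * (n1 * u) := by
      have : ((b : ℕ) : ℤ) = d * c := by rw [hc]; push_cast; rfl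
      rw [← this, ← mul_assoc, ← hn1, ← hnu]
      exact hbn
    have h2 := (mul_dvd_mul_iff_left (by exact_mod_cast hd0.ne' : (d : ℤ) ≠ 0)).1 h1
    exact hcn1.dvd_of_dvd_mul_left h2
  have hck : Nat.Coprime c k.factorial :=
    Nat.isCoprime_iff_coprime.1 (hucop.of_isCoprime_of_dvd_left hcu)
  have hcnm : (c : ℤ) ∣ n + m := hnu ▸ hcu.mul_left _
  have hcs : ∀ n' ∈ Z, Nat.Coprime c (s n') := by
    intro n' hn'
    apply Nat.Coprime.symm
    apply Nat.coprime_of_dvd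
    intro p hp hps hpc
    have h1 : (p : ℤ) ∣ n + m := (Int.natCast_dvd_natCast.2 hpc).trans hcnm
    have h2 : (p : ℤ) ∣ n' + m := (Int.natCast_dvd_natCast.2 hps).trans (hsm n' hn')
    have h3 : (p : ℤ) ∣ n - n' := by
      have := dvd_sub h1 h2
      have e : n + m - (n' + m) = n - n' := by ring
      rwa [e] at this
    have hne : n - n' ≠ 0 := by
      intro h
      have : n = n' := by linarith
      subst this
      exact Finset.disjoint_left.1 hAZ hn hn'
    have h4 : p ≤ k :=
      (Nat.le_of_dvd (Int.natAbs_pos.2 hne) (Int.natCast_dvd.1 h3)).trans (hk3 n hn n' hn')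
    exact hp.one_lt.ne' (Nat.Coprime.eq_one_of_dvd
      (hck.coprime_dvd_left hpc) (hp.dvd_factorial.2 h4))
  have hcq : Nat.Coprime c q := by
    rw [hq, hQ]
    exact (hck.mul_right hck).mul_right (Nat.Coprime.prod_right hcs)
  have hdDv : d ∈ Dv := by
    simp only [hDv, Finset.mem_biUnion, Nat.mem_divisors]
    exact ⟨n, hn, Nat.gcd_dvd_right _ _, hnabs.ne'⟩
  refine hmbad (n, d) (Finset.mem_product.2 ⟨hn, hdDv⟩) ?_
  refine ⟨⟨c, ⟨hc ▸ hbB, hcq⟩, ?_⟩, ?_⟩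
  · rw [add_comm]; exact hcnm
  · change (q : ℤ) ∣ m + n - (r + n)
    have e : m + n - (r + n) = m - r := by ring
    rw [e]; exact hmr'

lemma mem_Xeta_iff (B : Set ℕ) (y : ℤ → Bool) :
    y ∈ Xeta B ↔ ∀ I : Finset ℤ, ∃ m : ℤ, ∀ n ∈ I, eta B (n + m) = y n := by
  unfold Xeta
  rw [mem_closure_iff]
  constructor
  · intro h I
    obtain ⟨z, hz, m, rfl⟩ := h (Set.pi (I : Set ℤ) fun n => {y n})
      (isOpen_set_pi I.finite_toSet fun _ _ => isOpen_discrete _) (by intro n _; rfl)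
    exact ⟨m, fun n hn => hz n hn⟩
  · intro h o ho hy
    obtain ⟨I, u, hu, hsub⟩ := isOpen_pi_iff.1 ho y hy
    obtain ⟨m, hm⟩ := h I
    refine ⟨_, hsub ?_, m, rfl⟩
    intro n hn
    change eta B (n + m) ∈ u n
    rw [hm n hn]
    exact (hu n hn).2

/-- If `B` is taut and contains an infinite pairwise coprime subset, then `X_η`
is hereditary. -/
theorem Xeta_hereditary (B : Set ℕ) (hB0 : 0 ∉ B) (hprim : Primitive B) (htaut : IsTaut B)
    (hcop : ∃ S ⊆ B, S.Infinite ∧ ∀ a ∈ S, ∀ c ∈ S, a ≠ c → Nat.Coprime a c) :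
    ∀ x ∈ Xeta B, ∀ y : ℤ → Bool, (∀ n : ℤ, y n ≤ x n) → y ∈ Xeta B := by
  intro x hx y hyx
  rw [mem_Xeta_iff] at hx ⊢
  intro I
  obtain ⟨m, hm⟩ := hx I
  set A : Finset ℤ := (I.filter fun n => y n = true).image fun n => n + m with hA
  set Z : Finset ℤ := (I.filter fun n => y n = false).image fun n => n + m with hZ
  have hAZ : Disjoint A Z := by
    rw [Finset.disjoint_left]
    intro a ha hz
    simp only [hA, hZ, Finset.mem_image, Finset.mem_filter] at ha hz
    obtain ⟨n, ⟨_, hn⟩, rfl⟩ := ha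
    obtain ⟨n', ⟨_, hn'⟩, hnn⟩ := hz
    have : n' = n := by linarith
    subst this
    rw [hn] at hn'
    exact Bool.noConfusion hn'
  obtain ⟨m', h1, h2⟩ := main_pattern hB0 htaut hcop A Z hAZ (by
    intro a ha
    simp only [hA, Finset.mem_image, Finset.mem_filter] at ha
    obtain ⟨n, ⟨hnI, hn⟩, rfl⟩ := ha
    have h3 := hyx n
    rw [hn, ← hm n hnI] at h3
    have h4 : eta B (n + m) = true := top_le_iff.1 h3
    simpa [eta] using h4)
  refine ⟨m + m', fun n hn => ?_⟩
  rw [← add_assoc]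
  cases hy : y n with
  | true =>
    have := h1 (n + m) (Finset.mem_image.2 ⟨n, Finset.mem_filter.2 ⟨hn, hy⟩, rfl⟩)
    simpa [eta] using this
  | false =>
    have := h2 (n + m) (Finset.mem_image.2 ⟨n, Finset.mem_filter.2 ⟨hn, hy⟩, rfl⟩)
    simpa [eta, freeZ] using this
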